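/- arXiv:1907.03333 — 7 statements merged into one kernel-verified Lean document; each statement's English description precedes it below -/
import Mathlib

section
/- For every nonzero complex number k with arg k ∈ [-π/6, 0] and every real f > 0, one has |exp(-4 i k³/(3 f))| ≤ exp(-8 |k|² |Im k| / (3 f)). -/
/-- For every nonzero complex `k` with `arg k ∈ [-π/6, 0]` and every real `f > 0`,
`|exp(-4 i k³/(3 f))| ≤ exp(-8 |k|² |Im k| / (3 f))`. -/
theorem abs_exp_neg_le (k : ℂ) (hk : k ≠ 0)
    (harg : k.arg ∈ Set.Icc (-(Real.pi/6)) 0) (f : ℝ) (hf : 0 < f) :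
    ‖Complex.exp (-4 * Complex.I * k^3 / (3 * (f : ℂ)))‖ ≤
      Real.exp (-8 * ‖k‖^2 * |k.im| / (3 * f)) := by
  obtain ⟨h1, h2⟩ := harg
  have hpi := Real.pi_pos
  have hy : k.im ≤ 0 := by
    by_contra h
    push Not at h
    have h3 := Complex.arg_nonneg_iff.mpr h.le
    have h4 : k.arg = 0 := le_antisymm h2 h3
    have := (Complex.arg_eq_zero_iff.mp h4).2
    linarith
  have hs : -(1/2) ≤ Real.sin k.arg := by
    rw [← Real.sin_pi_div_six, ← Real.sin_neg]
    exact Real.sin_le_sin_of_le_of_le_pi_div_two (by linarith) (by linarith) h1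
  have him : ‖k‖ * Real.sin k.arg = k.im := Complex.norm_mul_sin_arg k
  have hn : ‖k‖^2 = k.re^2 + k.im^2 := by
    rw [← Complex.normSq_eq_norm_sq, Complex.normSq_apply]; ring
  have hr := norm_nonneg k
  have hb : -‖k‖ ≤ 2 * k.im := by nlinarith
  have hx : 3 * k.im^2 ≤ k.re^2 := by nlinarith
  have hre : (-4 * Complex.I * k^3 / (3 * (f : ℂ))).re
      = 4 * (k.im * (3 * k.re^2 - k.im^2)) / (3 * f) := by
    have : (3 * (f : ℂ)) = ((3 * f : ℝ) : ℂ) := by push_cast; rfl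
    rw [this, Complex.div_ofReal_re]
    congr 1
    simp [pow_succ]
    ring
  rw [Complex.norm_exp, hre, abs_of_nonpos hy, hn]
  apply Real.exp_le_exp.mpr
  apply div_le_div_of_nonneg_right _ (by positivity)
  nlinarith [mul_nonneg (neg_nonneg.mpr hy) (sub_nonneg.mpr hx)]
end

section
/- For every nonzero complex number k with arg k ∈ [-π/2, -5π/12] and every real f > 0, one has |exp(4 i k³/(3 f))| ≤ exp(-2√2 |k|³ / (3 f)). -/
/-- For every nonzero complex `k` with `arg k ∈ [-π/2, -5π/12]` and every real `f > 0`,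
`|exp(4 i k³/(3 f))| ≤ exp(-2√2 |k|³ / (3 f))`. -/
theorem abs_exp_le_sector (k : ℂ) (hk : k ≠ 0)
    (harg : k.arg ∈ Set.Icc (-(Real.pi/2)) (-(5 * Real.pi/12))) (f : ℝ) (hf : 0 < f) :
    ‖Complex.exp (4 * Complex.I * k^3 / (3 * (f : ℂ)))‖ ≤
      Real.exp (-2 * Real.sqrt 2 * ‖k‖^3 / (3 * f)) := by
  obtain ⟨h1, h2⟩ := harg
  have hsin : Real.sqrt 2 / 2 ≤ Real.sin (3 * k.arg) := by
    have e : Real.sin (3 * k.arg) = Real.cos (3 * k.arg + 3 * Real.pi / 2) := by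
      have : 3 * k.arg + 3 * Real.pi / 2 = (3 * k.arg - Real.pi / 2) + 2 * Real.pi := by ring
      rw [this, Real.cos_add_two_pi, Real.cos_sub_pi_div_two]
    rw [e, ← Real.cos_pi_div_four]
    apply Real.cos_le_cos_of_nonneg_of_le_pi <;> linarith [Real.pi_pos]
  have him : (k^3).im = ‖k‖^3 * Real.sin (3 * k.arg) := by
    have e : k^3 = ((‖k‖^3 : ℝ) : ℂ) * Complex.exp (((3 * k.arg : ℝ) : ℂ) * Complex.I) := by
      conv_lhs => rw [← Complex.norm_mul_exp_arg_mul_I k]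
      rw [mul_pow, ← Complex.exp_nat_mul]
      push_cast
      ring_nf
    rw [e, Complex.im_ofReal_mul,
      Complex.exp_ofReal_mul_I_im]
  have hre : (4 * Complex.I * k^3 / (3 * (f : ℂ))).re = -(4 * (k^3).im) / (3 * f) := by
    have e : 4 * Complex.I * k^3 / (3 * (f : ℂ))
        = (4 * Complex.I * k^3) / ((3 * f : ℝ) : ℂ) := by push_cast; rfl
    rw [e, Complex.div_ofReal_re]
    congr 1
    rw [mul_assoc]
    simp [-Complex.mul_re, Complex.mul_re 4, Complex.I_mul_re]
  rw [Complex.norm_exp, Real.exp_le_exp, hre, him]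
  apply div_le_div_of_nonneg_right _ (by positivity)
  have := mul_le_mul_of_nonneg_left hsin (by positivity : 0 ≤ ‖k‖^3)
  linarith
end

section
/- Let k₀ > 0 and κ be real numbers with 0 ≤ κ ≤ k₀/√3, let f > 0, and set k = e^{-iπ/3}(k₀ - iκ). Then |exp(4 i k³/(3 f))| ≤ exp(-8 |k|² κ / (3 f)). -/
/-- Let `k₀ > 0` and `0 ≤ κ ≤ k₀/√3`, let `f > 0`, and set `k = e^{-iπ/3}(k₀ - iκ)`.
Then `|exp(4 i k³/(3 f))| ≤ exp(-8 |k|² κ / (3 f))`. -/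
theorem abs_exp_le_line (k₀ κ f : ℝ) (hk₀ : 0 < k₀) (hκ : 0 ≤ κ)
    (hκ' : κ ≤ k₀ / Real.sqrt 3) (hf : 0 < f)
    (k : ℂ) (hk : k = Complex.exp (-(Complex.I * Real.pi / 3)) * ((k₀ : ℂ) - Complex.I * κ)) :
    ‖Complex.exp (4 * Complex.I * k^3 / (3 * (f : ℂ)))‖ ≤
      Real.exp (-8 * ‖k‖^2 * κ / (3 * f)) := by
  have h3 : k ^ 3 = -((k₀ : ℂ) - Complex.I * κ) ^ 3 := by
    rw [hk, mul_pow, ← Complex.exp_nat_mul]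
    have : ((3 : ℕ) : ℂ) * (-(Complex.I * Real.pi / 3)) = -(Real.pi * Complex.I) := by
      push_cast; ring
    rw [this, Complex.exp_neg, Complex.exp_pi_mul_I]
    norm_num
  have hn : ‖k‖ ^ 2 = k₀ ^ 2 + κ ^ 2 := by
    have e : -(Complex.I * Real.pi / 3) = ((-(Real.pi / 3) : ℝ) : ℂ) * Complex.I := by
      push_cast; ring
    rw [hk, norm_mul, e, Complex.norm_exp_ofReal_mul_I, one_mul, Complex.sq_norm,
      Complex.normSq_apply]
    simp
    ring
  have hle : 3 * κ ^ 2 ≤ k₀ ^ 2 := by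
    have hs : 0 < Real.sqrt 3 := by positivity
    rw [le_div_iff₀ hs] at hκ'
    have := pow_le_pow_left₀ (by positivity) hκ' 2
    rw [mul_pow, Real.sq_sqrt (by norm_num)] at this
    linarith
  have hI : 4 * Complex.I * k ^ 3 / (3 * (f : ℂ)) =
      ((4 * (κ ^ 3 - 3 * k₀ ^ 2 * κ) / (3 * f) : ℝ) : ℂ) +
      ((4 * (3 * k₀ * κ ^ 2 - k₀ ^ 3) / (3 * f) : ℝ) : ℂ) * Complex.I := by
    have h2 : Complex.I ^ 2 = -1 := Complex.I_sq
    have h4 : Complex.I ^ 4 = 1 := Complex.I_pow_four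
    have h33 : Complex.I ^ 3 = -Complex.I := Complex.I_pow_three
    rw [h3]
    push_cast
    rw [← mul_div_right_comm, ← add_div]
    congr 1
    ring_nf
    simp only [h2, h4, h33]
    ring
  rw [Complex.norm_exp, hI, hn, Real.exp_le_exp]
  simp only [Complex.add_re, Complex.ofReal_re, Complex.re_ofReal_mul, Complex.I_re, mul_zero,
    add_zero]
  apply div_le_div_of_nonneg_right _ (by positivity)
  nlinarith [mul_le_mul_of_nonneg_left hle hκ]
end

section
/- Let k₀ > 0, 0 < ε < k₀/2, and let L be a holomorphic function on an open set containing the closed disk D = {k ∈ ℂ : |k - k₀| ≤ ε}. Let f₀ > 0, C₁ > 0 and let c : D × (0, f₀) → ℂ satisfy |c(k,f)| ≤ C₁ f and |c(k,f) - c(k',f)| ≤ C₁ |k - k'| for all k, k' ∈ D and f ∈ (0, f₀). Then there exist ε' ∈ (0, ε], f₁ ∈ (0, f₀] and C₂ > 0 such that for every f ∈ (0, f₁) and every real η₀ with |η₀ - k₀| < ε'/2, the equation k³ = η₀³ + (3 i f/4) L(k) + f c(k,f) has exactly one solution k with |k - k₀| < ε', and this solution satisfies |k - η₀ - i (f/(4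 η₀²)) L(η₀)| ≤ C₂ f². -/
lemma aux_T (k₀ e f M η : ℝ) (hk₀ : 0 < k₀) (he : 0 < e) (hek : e ≤ k₀ / 10)
    (hf : 0 < f) (g : ℂ → ℂ)
    (hM : ∀ k ∈ Metric.closedBall (k₀ : ℂ) e, ∀ k' ∈ Metric.closedBall (k₀ : ℂ) e,
      ‖g k - g k'‖ ≤ M * ‖k - k'‖)
    (hfM : f * M ≤ k₀ ^ 2 / 2) (T : ℂ → ℂ)
    (hT : ∀ k, T k = k - (k ^ 3 - (η : ℂ) ^ 3 - f * g k) / (3 * (k₀ : ℂ) ^ 2)) :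
    ∀ k ∈ Metric.closedBall (k₀ : ℂ) e, ∀ k' ∈ Metric.closedBall (k₀ : ℂ) e,
      ‖T k - T k'‖ ≤ 1 / 2 * ‖k - k'‖ := by
  intro k hk k' hk'
  have h0 : (k₀ : ℂ) ≠ 0 := by exact_mod_cast hk₀.ne'
  have hg := hM k hk k' hk'
  rw [mem_closedBall_iff_norm] at hk hk'
  have e1 : T k - T k' = ((k - k') * (-((k - k₀) * (k - k₀) + (k - k₀) * (k' - k₀)
      + (k' - k₀) * (k' - k₀) + 3 * k₀ * (k - k₀) + 3 * k₀ * (k' - k₀)))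
      + f * (g k - g k')) / (3 * (k₀ : ℂ) ^ 2) := by
    rw [hT, hT]; field_simp; ring
  have hn3 : ‖(3 * (k₀ : ℂ))‖ = 3 * k₀ := by
    rw [norm_mul, Complex.norm_real, Real.norm_of_nonneg hk₀.le]; norm_num
  have hq : ‖(k - k₀) * (k - k₀) + (k - k₀) * (k' - k₀)
      + (k' - k₀) * (k' - k₀) + 3 * k₀ * (k - k₀) + 3 * k₀ * (k' - k₀)‖
      ≤ e * e + e * e + e * e + 3 * k₀ * e + 3 * k₀ * e := by
    refine (norm_add_le _ _).trans (add_le_add ((norm_add_le _ _).trans (add_le_add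
      ((norm_add_le _ _).trans (add_le_add ((norm_add_le _ _).trans (add_le_add ?_ ?_))
        ?_)) ?_)) ?_)
    · rw [norm_mul]; gcongr
    · rw [norm_mul]; gcongr
    · rw [norm_mul]; gcongr
    · rw [norm_mul, hn3]; gcongr
    · rw [norm_mul, hn3]; gcongr
  have hq2 : e * e + e * e + e * e + 3 * k₀ * e + 3 * k₀ * e ≤ k₀ ^ 2 := by nlinarith
  have hden : ‖(3 * (k₀ : ℂ) ^ 2)‖ = 3 * k₀ ^ 2 := by
    rw [norm_mul, norm_pow, Complex.norm_real, Real.norm_of_nonneg hk₀.le]; norm_num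
  rw [e1, norm_div, hden, div_le_iff₀ (by positivity)]
  have hfn : ‖(f : ℂ)‖ = f := by rw [Complex.norm_real, Real.norm_of_nonneg hf.le]
  calc _ ≤ ‖k - k'‖ * k₀ ^ 2 + f * (M * ‖k - k'‖) := by
        refine (norm_add_le _ _).trans (add_le_add ?_ ?_)
        · rw [norm_mul, norm_neg]; gcongr; exact hq.trans hq2
        · rw [norm_mul, hfn]; gcongr
    _ ≤ _ := by nlinarith [norm_nonneg (k - k'), mul_le_mul_of_nonneg_right hfM (norm_nonneg (k - k'))]

lemma aux_main (k₀ e f M B η : ℝ) (hk₀ : 0 < k₀) (he : 0 < e) (hek : e ≤ k₀ / 10)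
    (hf : 0 < f) (g : ℂ → ℂ)
    (hM : ∀ k ∈ Metric.closedBall (k₀ : ℂ) e, ∀ k' ∈ Metric.closedBall (k₀ : ℂ) e,
      ‖g k - g k'‖ ≤ M * ‖k - k'‖)
    (hB : ∀ k ∈ Metric.closedBall (k₀ : ℂ) e, ‖g k‖ ≤ B)
    (hfM : f * M ≤ k₀ ^ 2 / 2) (hfB : f * B ≤ k₀ ^ 2 * e / 8) (hη : |η - k₀| < e / 2) :
    (∃! k : ℂ, ‖k - (k₀ : ℂ)‖ < e ∧ k ^ 3 = (η : ℂ) ^ 3 + f * g k) ∧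
    (∀ k : ℂ, ‖k - (k₀ : ℂ)‖ < e → k ^ 3 = (η : ℂ) ^ 3 + f * g k →
      ‖k - η‖ ≤ f * B / k₀ ^ 2) := by
  have h0 : (k₀ : ℂ) ≠ 0 := by exact_mod_cast hk₀.ne'
  obtain ⟨T, hT⟩ : ∃ T : ℂ → ℂ, ∀ k, T k =
      k - (k ^ 3 - (η : ℂ) ^ 3 - f * g k) / (3 * (k₀ : ℂ) ^ 2) := ⟨_, fun _ => rfl⟩
  have hc := aux_T k₀ e f M η hk₀ he hek hf g hM hfM T hT
  have hfix : ∀ k, T k = k ↔ k ^ 3 = (η : ℂ) ^ 3 + f * g k := by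
    intro k
    rw [hT, sub_eq_self, div_eq_zero_iff, or_iff_left (by simp [h0]), sub_sub, sub_eq_zero]
  have hηn : ‖(η : ℂ) - k₀‖ < e / 2 := by
    rw [← Complex.ofReal_sub, Complex.norm_real]; exact hη
  have hηm : (η : ℂ) ∈ Metric.closedBall (k₀ : ℂ) e := by
    rw [mem_closedBall_iff_norm]; linarith
  have hTη : ‖T η - η‖ ≤ f * B / k₀ ^ 2 / 2 := by
    have : T η - η = f * g η / (3 * (k₀ : ℂ) ^ 2) := by rw [hT]; ring
    have hden : ‖(3 * (k₀ : ℂ) ^ 2)‖ = 3 * k₀ ^ 2 := by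
      rw [norm_mul, norm_pow, Complex.norm_real, Real.norm_of_nonneg hk₀.le]; norm_num
    have hB' := hB _ hηm
    have hB0 := (norm_nonneg _).trans hB'
    rw [this, norm_div, hden, norm_mul, Complex.norm_real, Real.norm_of_nonneg hf.le,
      div_div, mul_comm (k₀ ^ 2) 2]
    gcongr
    norm_num
  have hTη2 : f * B / k₀ ^ 2 ≤ e / 8 := by
    rw [div_le_iff₀ (by positivity)]; linarith
  have hsub : ∀ k ∈ Metric.closedBall (η : ℂ) (e / 4), ‖k - k₀‖ < e := by
    intro k hk
    rw [mem_closedBall_iff_norm] at hk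
    have := norm_sub_le_norm_sub_add_norm_sub k η k₀
    linarith
  have hsub' : ∀ k ∈ Metric.closedBall (η : ℂ) (e / 4), k ∈ Metric.closedBall (k₀ : ℂ) e :=
    fun k hk => mem_closedBall_iff_norm.2 (hsub k hk).le
  have hmaps : Set.MapsTo T (Metric.closedBall (η : ℂ) (e / 4))
      (Metric.closedBall (η : ℂ) (e / 4)) := by
    intro k hk
    have h1 := hc k (hsub' k hk) η hηm
    rw [mem_closedBall_iff_norm] at hk ⊢
    have := norm_sub_le_norm_sub_add_norm_sub (T k) (T η) η
    linarith
  have hcon : ContractingWith (1 / 2 : NNReal) (hmaps.restrict T _ _) := by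
    refine ⟨by rw [← NNReal.coe_lt_coe]; norm_num, LipschitzWith.of_dist_le_mul ?_⟩
    rintro ⟨x, hx⟩ ⟨y, hy⟩
    have := hc x (hsub' x hx) y (hsub' y hy)
    simpa [Subtype.dist_eq, dist_eq_norm] using this
  obtain ⟨y, hy, hyf, -⟩ := hcon.exists_fixedPoint' Metric.isClosed_closedBall.isComplete hmaps
    (Metric.mem_closedBall_self (by positivity)) (edist_ne_top _ _)
  refine ⟨⟨y, ⟨hsub y hy, (hfix y).1 hyf⟩, ?_⟩, ?_⟩
  · rintro z ⟨hz, hz2⟩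
    have h1 := hc z (mem_closedBall_iff_norm.2 hz.le) y (hsub' y hy)
    rw [(hfix z).2 hz2, hyf] at h1
    exact sub_eq_zero.1 (norm_eq_zero.1 (by linarith [norm_nonneg (z - y)]))
  · intro k hk hk2
    have h1 := hc k (mem_closedBall_iff_norm.2 hk.le) η hηm
    rw [(hfix k).2 hk2] at h1
    have := norm_sub_le_norm_sub_add_norm_sub k (T η) η
    linarith

lemma aux_lip (k₀ : ℂ) (ε : ℝ) (L : ℂ → ℂ) (U : Set ℂ) (hU : IsOpen U)
    (hDU : Metric.closedBall k₀ ε ⊆ U) (hL : DifferentiableOn ℂ L U) :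
    ∃ M > (0 : ℝ), (∀ k ∈ Metric.closedBall k₀ ε, ‖L k‖ ≤ M) ∧
      ∀ k ∈ Metric.closedBall k₀ ε, ∀ k' ∈ Metric.closedBall k₀ ε,
      ‖L k - L k'‖ ≤ M * ‖k - k'‖ := by
  have hcpt := isCompact_closedBall k₀ ε
  obtain ⟨A, hA⟩ := hcpt.exists_bound_of_continuousOn (hL.continuousOn.mono hDU)
  obtain ⟨B, hB⟩ := hcpt.exists_bound_of_continuousOn ((hL.deriv hU).continuousOn.mono hDU)
  refine ⟨max 1 (max A B), by positivity, fun k hk => (hA k hk).trans (by simp), ?_⟩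
  intro k hk k' hk'
  exact (convex_closedBall k₀ ε).norm_image_sub_le_of_norm_deriv_le
    (fun x hx => hL.differentiableAt (hU.mem_nhds (hDU hx)))
    (fun x hx => (hB x hx).trans (by simp)) hk' hk

/-- Contraction lemma producing strings of resonances near the positive real axis.
Let `k₀ > 0`, `0 < ε < k₀/2`, let `L` be holomorphic on an open set containing the
closed disk `D = {k : |k - k₀| ≤ ε}`, and let `c(k,f)` satisfy `|c(k,f)| ≤ C₁ f` and a
Lipschitz bound `|c(k,f) - c(k',f)| ≤ C₁|k-k'|` on `D × (0,f₀)`.  Then there are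
`ε' ∈ (0,ε]`, `f₁ ∈ (0,f₀]`, `C₂ > 0` such that for every `f ∈ (0,f₁)` and every real
`η₀` with `|η₀ - k₀| < ε'/2`, the equation
`k³ = η₀³ + (3if/4)L(k) + f c(k,f)` has exactly one solution `k` with `|k - k₀| < ε'`,
and this solution satisfies `|k - η₀ - i(f/(4η₀²))L(η₀)| ≤ C₂ f²`. -/
theorem resonance_string_contraction (k₀ ε : ℝ) (hk₀ : 0 < k₀) (hε : 0 < ε)
    (hεk : ε < k₀ / 2)
    (L : ℂ → ℂ) (U : Set ℂ) (hU : IsOpen U)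
    (hDU : Metric.closedBall ((k₀ : ℂ)) ε ⊆ U) (hL : DifferentiableOn ℂ L U)
    (f₀ C₁ : ℝ) (hf₀ : 0 < f₀) (hC₁ : 0 < C₁)
    (c : ℂ → ℝ → ℂ)
    (hc1 : ∀ k ∈ Metric.closedBall ((k₀ : ℂ)) ε, ∀ f ∈ Set.Ioo (0 : ℝ) f₀,
      ‖c k f‖ ≤ C₁ * f)
    (hc2 : ∀ k ∈ Metric.closedBall ((k₀ : ℂ)) ε, ∀ k' ∈ Metric.closedBall ((k₀ : ℂ)) ε,
      ∀ f ∈ Set.Ioo (0 : ℝ) f₀, ‖c k f - c k' f‖ ≤ C₁ * ‖k - k'‖) :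
    ∃ ε' ∈ Set.Ioc (0 : ℝ) ε, ∃ f₁ ∈ Set.Ioc (0 : ℝ) f₀, ∃ C₂ > (0 : ℝ),
      ∀ f ∈ Set.Ioo (0 : ℝ) f₁, ∀ η₀ : ℝ, |η₀ - k₀| < ε' / 2 →
        (∃! k : ℂ, ‖k - (k₀ : ℂ)‖ < ε' ∧
          k ^ 3 = (η₀ : ℂ) ^ 3 + (3 * Complex.I * f / 4) * L k + (f : ℂ) * c k f) ∧
        (∀ k : ℂ, ‖k - (k₀ : ℂ)‖ < ε' →
          k ^ 3 = (η₀ : ℂ) ^ 3 + (3 * Complex.I * f / 4) * L k + (f : ℂ) * c k f →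
          ‖k - (η₀ : ℂ) - Complex.I * ((f : ℂ) / (4 * (η₀ : ℂ) ^ 2)) * L (η₀ : ℂ)‖
            ≤ C₂ * f ^ 2) := by
  obtain ⟨M, hM0, hLb, hLl⟩ := aux_lip k₀ ε L U hU hDU hL
  set e := min ε (k₀ / 10) with he_def
  have he : 0 < e := by positivity
  have heε : e ≤ ε := min_le_left _ _
  have hek : e ≤ k₀ / 10 := min_le_right _ _
  have hss : Metric.closedBall (k₀ : ℂ) e ⊆ Metric.closedBall (k₀ : ℂ) ε :=
    Metric.closedBall_subset_closedBall heε
  set N := M + C₁ with hN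
  set B := M + C₁ * f₀ with hB
  have hN0 : 0 < N := by positivity
  have hB0 : 0 < B := by positivity
  have h34 : ‖(3 * Complex.I / 4 : ℂ)‖ = 3 / 4 := by simp
  refine ⟨e, ⟨he, heε⟩, min f₀ (min (k₀ ^ 2 / 2 / N) (k₀ ^ 2 * e / 8 / B)),
    ⟨by positivity, min_le_left _ _⟩,
    (M * (B / k₀ ^ 2) + C₁ + (B / k₀ ^ 2) ^ 2 * (6 * k₀)) / k₀ ^ 2 * 2, by positivity, ?_⟩
  rintro f ⟨hf, hf1⟩ η hη
  rw [lt_min_iff, lt_min_iff, lt_div_iff₀ hN0, lt_div_iff₀ hB0] at hf1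
  obtain ⟨hff, hfN, hfB⟩ := hf1
  have hg : ∀ k, (3 * Complex.I * f / 4) * L k + (f : ℂ) * c k f
      = f * ((3 * Complex.I / 4) * L k + c k f) := fun k => by ring
  simp only [add_assoc, hg]
  have key := aux_main k₀ e f N B η hk₀ he hek hf
    (fun k => (3 * Complex.I / 4) * L k + c k f) ?_ ?_ hfN.le hfB.le hη
  · refine ⟨key.1, ?_⟩
    intro k hk hk2
    have hd := key.2 k hk hk2
    have hkm : k ∈ Metric.closedBall (k₀ : ℂ) ε :=
      hss (mem_closedBall_iff_norm.2 hk.le)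
    have hηn : ‖(η : ℂ) - k₀‖ < e / 2 := by
      rw [← Complex.ofReal_sub, Complex.norm_real]; exact hη
    have hηm : (η : ℂ) ∈ Metric.closedBall (k₀ : ℂ) ε := by
      rw [mem_closedBall_iff_norm]; linarith
    obtain ⟨hη1, hη2⟩ := abs_lt.1 hη
    have hηpos : 0 < η := by linarith
    have hη0 : (η : ℂ) ≠ 0 := by exact_mod_cast hηpos.ne'
    have hid : k - (η : ℂ) - Complex.I * ((f : ℂ) / (4 * (η : ℂ) ^ 2)) * L (η : ℂ)
        = (f * ((3 * Complex.I / 4) * (L k - L η)) + f * c k f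
          - (k - η) ^ 2 * (k + 2 * η)) / (3 * (η : ℂ) ^ 2) := by
      field_simp
      linear_combination 4 * hk2
    have hden : ‖(3 * (η : ℂ) ^ 2)‖ = 3 * η ^ 2 := by
      rw [norm_mul, norm_pow, Complex.norm_real, Real.norm_of_nonneg hηpos.le]; norm_num
    have hfn : ‖(f : ℂ)‖ = f := by rw [Complex.norm_real, Real.norm_of_nonneg hf.le]
    have hsum : ‖k + 2 * (η : ℂ)‖ ≤ 6 * k₀ := by
      have : k + 2 * (η : ℂ) = (k - k₀) + ((3 * η + (k₀ - η) : ℝ) : ℂ) := by push_cast; ring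
      rw [this]
      refine (norm_add_le _ _).trans ?_
      rw [Complex.norm_real, Real.norm_of_nonneg (by linarith)]
      linarith
    have hd' : ‖k - η‖ ≤ f * (B / k₀ ^ 2) := by rw [← mul_div_assoc]; exact hd
    have hnum : ‖f * ((3 * Complex.I / 4) * (L k - L η)) + f * c k f
          - (k - η) ^ 2 * (k + 2 * η)‖ ≤
        f * (1 * (M * (f * (B / k₀ ^ 2)))) + f * (C₁ * f)
          + (f * (B / k₀ ^ 2)) ^ 2 * (6 * k₀) := by
      refine (norm_sub_le _ _).trans (add_le_add ((norm_add_le _ _).trans (add_le_add ?_ ?_)) ?_)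
      · rw [norm_mul, norm_mul, hfn, h34]
        gcongr
        · norm_num
        · exact (hLl k hkm η hηm).trans (by gcongr)
      · rw [norm_mul, hfn]
        gcongr
        exact hc1 k hkm f ⟨hf, hff⟩
      · rw [norm_mul, norm_pow]; gcongr
    rw [hid, norm_div, hden]
    have hηk : k₀ ^ 2 / 2 ≤ 3 * η ^ 2 := by nlinarith
    calc _ ≤ _ := div_le_div₀ (by positivity) hnum (by positivity) hηk
      _ = _ := by field_simp; ring
  · intro k hk k' hk'
    have h1 := hLl k (hss hk) k' (hss hk')
    have h2 := hc2 k (hss hk) k' (hss hk') f ⟨hf, hff⟩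
    have : (3 * Complex.I / 4) * L k + c k f - ((3 * Complex.I / 4) * L k' + c k' f)
      = (3 * Complex.I / 4) * (L k - L k') + (c k f - c k' f) := by ring
    show ‖(3 * Complex.I / 4) * L k + c k f - ((3 * Complex.I / 4) * L k' + c k' f)‖ ≤ _
    rw [this]
    refine (norm_add_le _ _).trans ?_
    rw [norm_mul, h34]
    nlinarith [norm_nonneg (L k - L k')]
  · intro k hk
    have h1 := hLb k (hss hk)
    have h2 := hc1 k (hss hk) f ⟨hf, hff⟩
    refine (norm_add_le _ _).trans ?_
    rw [norm_mul, h34]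
    nlinarith [norm_nonneg (L k)]
end

section
/- For every k₀ > 0 and L ∈ ℝ there exist f₀ > 0, ε > 0, C > 0 and functions a₁, a₂ : (k₀-ε, k₀+ε) × (0, f₀) → ℂ with |a_j(k,f) - 1| ≤ C f for j = 1, 2, such that for all real k ∈ (k₀-ε, k₀+ε) and all f ∈ (0, f₀), setting η = k² - f L (which is positive), one has Ai( f^{1/3}(L - k²/f) ) = f^{1/6} e^{-iπ/4} (1/(2 √π η^{1/4})) ( e^{2 i η^{3/2}/(3f)} a₁(k,f) + i e^{-2 i η^{3/2}/(3f)} a₂(k,f) ). -/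
open Filter MeasureTheory Real

/-- The Airy function, defined for real `x` by
`Ai(x) = (2π)⁻¹ · lim_{R→∞} ∫_{-R}^{R} e^{i(t³/3 + x t)} dt`. -/
noncomputable def Ai (x : ℝ) : ℂ :=
  ((2 * Real.pi : ℝ)⁻¹ : ℂ) * limUnder Filter.atTop
    (fun R : ℝ => ∫ t in (-R)..R, Complex.exp (Complex.I * ((t : ℂ)^3 / 3 + (x : ℂ) * t)))

noncomputable def hh (l : ℝ) (s : ℂ) : ℂ := Complex.exp (Complex.I * l * (s^3/3 - s))

noncomputable def seg (h : ℂ → ℂ) (a b : ℂ) : ℂ := ∫ t in (0:ℝ)..1, (b - a) * h (a + t * (b - a))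

lemma hh_diff (l : ℝ) : Differentiable ℂ (hh l) := by unfold hh; fun_prop

lemma seg_eq_sub {h : ℂ → ℂ} (hh : Differentiable ℂ h) (ρ : ℝ) :
    ∃ G : ℂ → ℂ, ∀ a b : ℂ, a ∈ Metric.ball (0:ℂ) ρ → b ∈ Metric.ball (0:ℂ) ρ → seg h a b = G b - G a := by
  obtain ⟨G, hG⟩ := (hh.differentiableOn (s := Metric.ball (0:ℂ) ρ)).isExactOn_ball
  refine ⟨G, fun a b ha hb => ?_⟩
  have hmem : ∀ t ∈ Set.uIcc (0:ℝ) 1, a + t * (b - a) ∈ Metric.ball (0:ℂ) ρ := by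
    intro t ht
    rw [Set.uIcc_of_le zero_le_one] at ht
    have := (convex_ball (0:ℂ) ρ).add_smul_sub_mem ha hb ht
    simpa using this
  have := intervalIntegral.integral_eq_sub_of_hasDerivAt (f := fun t : ℝ => G (a + t * (b - a)))
    (f' := fun t : ℝ => (b - a) * h (a + t * (b - a))) (a := 0) (b := 1) ?_ ?_
  · simpa [seg] using this
  · intro t ht
    have h1 := hG _ (hmem t ht)
    have h2 : HasDerivAt (fun t : ℝ => a + t * (b - a)) (b - a) t := by
      have := ((Complex.ofRealCLM.hasDerivAt (x := t)).mul_const (b - a)).const_add a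
      simpa using this
    have := h1.comp_of_eq t h2 rfl
    rw [mul_comm]; exact this
  · apply Continuous.intervalIntegrable
    have := hh.continuous
    fun_prop

lemma seg_add {h : ℂ → ℂ} (hh : Differentiable ℂ h) (a b c : ℂ) : seg h a b + seg h b c = seg h a c := by
  obtain ⟨G, hG⟩ := seg_eq_sub hh (‖a‖ + ‖b‖ + ‖c‖ + 1)
  have ha : a ∈ Metric.ball (0:ℂ) (‖a‖ + ‖b‖ + ‖c‖ + 1) := by
    simp; linarith [norm_nonneg b, norm_nonneg c]
  have hb : b ∈ Metric.ball (0:ℂ) (‖a‖ + ‖b‖ + ‖c‖ + 1) := by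
    simp; linarith [norm_nonneg a, norm_nonneg c]
  have hc : c ∈ Metric.ball (0:ℂ) (‖a‖ + ‖b‖ + ‖c‖ + 1) := by
    simp; linarith [norm_nonneg a, norm_nonneg b]
  rw [hG _ _ ha hb, hG _ _ hb hc, hG _ _ ha hc]; ring

lemma conj_intervalIntegral (F : ℝ → ℂ) (a b : ℝ) :
    (starRingEnd ℂ) (∫ t in a..b, F t) = ∫ t in a..b, (starRingEnd ℂ) (F t) := by
  simp only [intervalIntegral, map_sub, ← integral_conj]

lemma hh_conj (l : ℝ) (s : ℂ) : (starRingEnd ℂ) (hh l s) = hh l (-(starRingEnd ℂ) s) := by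
  unfold hh
  rw [← Complex.exp_conj]
  congr 1
  have h3 : (starRingEnd ℂ) 3 = 3 := Complex.conj_ofNat 3
  simp [h3]
  ring

lemma seg_conj (l : ℝ) (a b : ℂ) :
    (starRingEnd ℂ) (seg (hh l) a b) = seg (hh l) (-(starRingEnd ℂ) b) (-(starRingEnd ℂ) a) := by
  unfold seg
  rw [conj_intervalIntegral]
  have key := intervalIntegral.integral_comp_sub_left (fun t : ℝ => (-(starRingEnd ℂ) a - -(starRingEnd ℂ) b) * hh l (-(starRingEnd ℂ) b + t * (-(starRingEnd ℂ) a - -(starRingEnd ℂ) b))) (1:ℝ) (a := 0) (b := 1)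
  simp only [sub_self, sub_zero] at key
  rw [← key]
  congr 1; ext t
  simp only [map_mul, hh_conj, map_sub, map_add, Complex.conj_ofReal]
  push_cast
  congr 1
  · ring
  · congr 1; ring

lemma seg_real (h : ℂ → ℂ) (a b : ℝ) : seg h a b = ∫ t in a..b, h t := by
  by_cases hab : b = a
  · subst hab; simp [seg]
  have hab' : b - a ≠ 0 := sub_ne_zero.2 hab
  unfold seg
  rw [intervalIntegral.integral_const_mul]
  have := intervalIntegral.integral_comp_add_mul (fun t : ℝ => h t) hab' a (a := 0) (b := 1)
  rw [show (fun t : ℝ => h (a + t * (b - a))) = fun t : ℝ => h ((a + (b - a) * t : ℝ) : ℂ) by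
    ext t; push_cast; congr 1; ring]
  rw [this]
  rw [Complex.real_smul, ← mul_assoc]
  have : ((b:ℂ) - a) ≠ 0 := by exact_mod_cast hab'
  push_cast
  rw [mul_inv_cancel₀ this]; simp

/-- vertical -/
lemma seg_vert (h : ℂ → ℂ) (R y : ℝ) (hy : 0 < y) :
    ‖seg h (R + y * Complex.I) R‖ ≤ ∫ t in (0:ℝ)..y, ‖h (R + t * Complex.I)‖ := by
  have hy' : (y:ℝ) ≠ 0 := hy.ne'
  have : seg h (R + y * Complex.I) R = -Complex.I * ∫ t in (0:ℝ)..y, h (R + t * Complex.I) := by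
    unfold seg
    rw [intervalIntegral.integral_const_mul]
    have := intervalIntegral.integral_comp_sub_mul (fun t : ℝ => h (R + t * Complex.I)) hy' y (a := 0) (b := 1)
    rw [show (fun t : ℝ => h (R + y * Complex.I + t * (R - (R + y * Complex.I)))) = fun t : ℝ => h (R + ((y - y * t : ℝ) : ℂ) * Complex.I) by
      ext t; push_cast; congr 1; ring]
    rw [this]
    rw [Complex.real_smul]
    have : (y:ℂ) ≠ 0 := by exact_mod_cast hy'
    push_cast
    field_simp
    simp
  rw [this, norm_mul]
  simp only [norm_neg, Complex.norm_I, one_mul]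
  exact intervalIntegral.norm_integral_le_integral_norm hy.le

lemma hh_vert_norm (l R y : ℝ) (hl : 0 < l) (hR : 3 ≤ R) (hy : 0 ≤ y) (hyR : y ≤ R) :
    ‖hh l (R + y * Complex.I)‖ ≤ Real.exp (-(l * R) * y) := by
  unfold hh
  rw [Complex.norm_exp]
  apply Real.exp_le_exp.2
  have : (Complex.I * l * (((R:ℂ) + y * Complex.I)^3/3 - (R + y * Complex.I))) =
    ((-l * (R^2*y - y^3/3 - y) : ℝ) : ℂ) + ((l * (R^3/3 - R * y^2 - R) : ℝ) : ℂ) * Complex.I := by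
    push_cast
    have hI : Complex.I^2 = -1 := Complex.I_sq
    have hI3 : Complex.I^3 = -Complex.I := by rw [pow_succ, hI]; ring
    have hI4 : Complex.I^4 = 1 := Complex.I_pow_four
    ring_nf
    simp only [hI, hI3, hI4]
    ring
  rw [this]
  simp only [Complex.add_re, Complex.ofReal_re, Complex.mul_re, Complex.I_re, Complex.ofReal_im, Complex.I_im]
  have h1 : R * y ≤ R^2*y - y^3/3 - y := by
    have : 0 ≤ y * (R^2 - y^2/3 - 1 - R) := by
      apply mul_nonneg hy
      nlinarith
    nlinarith
  nlinarith [mul_le_mul_of_nonneg_left h1 hl.le]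

lemma vert_tendsto (l : ℝ) (hl : 0 < l) :
    Tendsto (fun R : ℝ => seg (hh l) (R + (R - 1 : ℝ) * Complex.I) R) atTop (nhds 0) := by
  have hb : Tendsto (fun R : ℝ => (l * R)⁻¹) atTop (nhds 0) :=
    tendsto_inv_atTop_zero.comp (tendsto_id.const_mul_atTop hl)
  refine squeeze_zero_norm' ?_ hb
  filter_upwards [eventually_ge_atTop 3] with R hR
  refine (seg_vert _ R (R-1) (by linarith)).trans ?_
  have hc := (hh_diff l).continuous
  have h1 : ∫ t in (0:ℝ)..(R-1), ‖hh l (R + t * Complex.I)‖ ≤ ∫ t in (0:ℝ)..(R-1), Real.exp (-(l * R) * t) := by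
    apply intervalIntegral.integral_mono_on (by linarith)
    · apply Continuous.intervalIntegrable; fun_prop
    · apply Continuous.intervalIntegrable; fun_prop
    · intro t ht
      exact hh_vert_norm l R t hl hR ht.1 (by linarith [ht.2])
  refine h1.trans ?_
  have hlR : 0 < l * R := by positivity
  rw [intervalIntegral.integral_comp_mul_left (fun t => Real.exp t) (neg_ne_zero.2 hlR.ne')]
  rw [integral_exp]
  simp only [smul_eq_mul, mul_zero, Real.exp_zero]
  rw [inv_neg, neg_mul, ← mul_neg]
  apply mul_le_of_le_one_right (by positivity)
  linarith [Real.exp_pos (-(l * R) * (R - 1))]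

noncomputable def ww (l v : ℝ) : ℂ := -((2/3 * l * v^3 : ℝ) : ℂ) * (1 + Complex.I)

noncomputable def phi (l v : ℝ) : ℂ := ((Real.exp (-(2 * l) * v^2) : ℝ) : ℂ) * Complex.exp (ww l v)

lemma hh_path (l v : ℝ) : hh l (1 + (1 + Complex.I) * v) =
    Complex.exp (-(2 * Complex.I * l / 3)) * phi l v := by
  unfold hh phi ww
  rw [Complex.ofReal_exp, ← Complex.exp_add, ← Complex.exp_add]
  congr 1
  push_cast
  have hI : Complex.I^2 = -1 := Complex.I_sq
  have hI3 : Complex.I^3 = -Complex.I := by rw [pow_succ, hI]; ring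
  have hI4 : Complex.I^4 = 1 := Complex.I_pow_four
  ring_nf
  simp only [hI, hI3, hI4]
  ring

lemma seg_diag (l R : ℝ) (hR : 0 < R) : seg (hh l) (-Complex.I) (R + (R - 1 : ℝ) * Complex.I) =
    (1 + Complex.I) * Complex.exp (-(2 * Complex.I * l / 3)) * ∫ v in (-1:ℝ)..(R-1), phi l v := by
  unfold seg
  rw [intervalIntegral.integral_const_mul]
  have := intervalIntegral.integral_comp_add_mul (fun v : ℝ => hh l (1 + (1 + Complex.I) * v)) hR.ne' (-1) (a := 0) (b := 1)
  rw [show (fun t : ℝ => hh l (-Complex.I + t * (R + (R - 1 : ℝ) * Complex.I - -Complex.I))) = fun t : ℝ => hh l (1 + (1 + Complex.I) * ((-1 + R * t : ℝ) : ℂ)) by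
      ext t; push_cast; congr 1; ring]
  rw [this, Complex.real_smul]
  simp only [hh_path]
  rw [intervalIntegral.integral_const_mul]
  have : (R:ℂ) ≠ 0 := by exact_mod_cast hR.ne'
  push_cast
  rw [show -1 + R * 0 = (-1:ℝ) by ring, show -1 + R * 1 = R - 1 by ring]
  field_simp
  ring

lemma ww_norm_sq (l v : ℝ) : ‖ww l v‖^2 = 8/9 * l^2 * v^6 := by
  unfold ww
  rw [norm_mul, mul_pow, norm_neg, Complex.norm_real, ← Complex.normSq_eq_norm_sq (1 + Complex.I)]
  rw [Real.norm_eq_abs, sq_abs]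
  simp [Complex.normSq_apply]
  ring_nf

lemma ww_norm_le (l v : ℝ) (hl : 0 ≤ l) : ‖ww l v‖ ≤ l * |v|^3 := by
  refine (sq_le_sq₀ (norm_nonneg _) (by positivity)).1 ?_
  rw [ww_norm_sq, mul_pow, ← pow_mul, show 3 * 2 = 6 by rfl, Even.pow_abs (by decide)]
  have : 0 ≤ l^2 * v^6 := by positivity
  linarith

lemma g_bound (l v : ℝ) (hl : 1 ≤ l) :
    ‖(Set.Ioi (-1:ℝ)).indicator (phi l) v - ((Real.exp (-(2 * l) * v^2) : ℝ) : ℂ) * (1 + ww l v)‖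
      ≤ 3 * (l^2 * v^6 * Real.exp (-l * v^2)) := by
  have hw := ww_norm_le l v (by linarith)
  have hpos : 0 ≤ l^2 * v^6 := by positivity
  have hee : Real.exp (-(2 * l) * v^2) ≤ Real.exp (-l * v^2) := by
    apply Real.exp_le_exp.2; nlinarith [sq_nonneg v]
  by_cases h1 : |v| < 1
  · have hv := abs_lt.1 h1
    rw [Set.indicator_of_mem (show v ∈ Set.Ioi (-1:ℝ) from hv.1)]
    have hb := Complex.norm_exp_sub_sum_le_norm_mul_exp (ww l v) 2
    simp only [Finset.sum_range_succ, Finset.sum_range_zero] at hb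
    norm_num at hb
    unfold phi
    rw [← mul_sub, norm_mul, Complex.norm_real, Real.norm_of_nonneg (Real.exp_pos _).le]
    have hw2 : ‖ww l v‖ ≤ l * v^2 := by
      refine hw.trans ?_
      rw [← sq_abs v]
      apply mul_le_mul_of_nonneg_left _ (by linarith)
      exact pow_le_pow_of_le_one (abs_nonneg v) h1.le (by norm_num)
    calc Real.exp (-(2 * l) * v^2) * ‖Complex.exp (ww l v) - (1 + ww l v)‖
        ≤ Real.exp (-(2 * l) * v^2) * (‖ww l v‖^2 * Real.exp (l * v^2)) := by
          gcongr
          refine hb.trans ?_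
          gcongr
      _ = 8/9 * (l^2 * v^6 * Real.exp (-l * v^2)) := by
          rw [ww_norm_sq, show -l * v^2 = -(2 * l) * v^2 + l * v^2 by ring, Real.exp_add]; ring
      _ ≤ _ := by
          have : 0 ≤ l^2 * v^6 * Real.exp (-l * v^2) := by positivity
          linarith
  · push Not at h1
    have h3 : 1 ≤ l * |v|^3 := one_le_mul_of_one_le_of_one_le hl (one_le_pow₀ h1)
    have hsq : (l * |v|^3)^2 = l^2 * v^6 := by
      rw [mul_pow, ← pow_mul, show 3 * 2 = 6 by rfl, Even.pow_abs (by decide)]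
    have h4 : l * |v|^3 ≤ l^2 * v^6 := by rw [← hsq]; nlinarith
    have hw1 : ‖1 + ww l v‖ ≤ 2 * (l^2 * v^6) := by
      refine (norm_add_le _ _).trans ?_
      rw [norm_one]; linarith
    have hind : ‖(Set.Ioi (-1:ℝ)).indicator (phi l) v‖ ≤ Real.exp (-(2 * l) * v^2) := by
      by_cases hv : v ∈ Set.Ioi (-1:ℝ)
      · rw [Set.indicator_of_mem hv]
        unfold phi
        rw [norm_mul, Complex.norm_real, Real.norm_of_nonneg (Real.exp_pos _).le, Complex.norm_exp]
        apply mul_le_of_le_one_right (Real.exp_pos _).le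
        apply Real.exp_le_one_iff.2
        have hv0 : 0 ≤ v := by
          by_contra hneg
          push Not at hneg
          rw [abs_of_neg hneg] at h1
          have : -1 < v := hv
          linarith
        have : (ww l v).re = -(2/3 * l * v^3) := by
          unfold ww
          rw [← Complex.ofReal_neg, Complex.re_ofReal_mul]; simp
        rw [this]
        have : 0 ≤ l * v^3 := by positivity
        linarith
      · rw [Set.indicator_of_notMem hv, norm_zero]; positivity
    calc _ ≤ Real.exp (-(2 * l) * v^2) + Real.exp (-(2 * l) * v^2) * (2 * (l^2 * v^6)) := by
          refine (norm_sub_le _ _).trans ?_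
          rw [norm_mul, Complex.norm_real, Real.norm_of_nonneg (Real.exp_pos _).le]
          gcongr
      _ ≤ Real.exp (-l * v^2) * (3 * (l^2 * v^6)) := by
          have e := (Real.exp_pos (-(2 * l) * v^2)).le
          calc _ = Real.exp (-(2 * l) * v^2) * (1 + 2 * (l^2*v^6)) := by ring
            _ ≤ _ := by gcongr; linarith
      _ = _ := by ring

lemma integrable_pow_gauss (b : ℝ) (hb : 0 < b) (n : ℕ) : Integrable (fun v : ℝ => v^n * Real.exp (-b * v^2)) := by
  have := integrable_rpow_mul_exp_neg_mul_sq hb (s := n) (by have : (0:ℝ) ≤ n := n.cast_nonneg; linarith)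
  simpa using this

lemma integral_cube (b : ℝ) : ∫ v : ℝ, v^3 * Real.exp (-b * v^2) = 0 := by
  have h := integral_neg_eq_self (fun v : ℝ => v^3 * Real.exp (-b * v^2)) volume
  have h2 : (fun v : ℝ => (-v)^3 * Real.exp (-b * (-v)^2)) = fun v : ℝ => -(v^3 * Real.exp (-b * v^2)) := by
    ext v; rw [neg_sq]; ring
  rw [h2, integral_neg] at h
  linarith

noncomputable def C6 : ℝ := ∫ v : ℝ, v^6 * Real.exp (-1 * v^2)

lemma integral_six (l : ℝ) (hl : 0 < l) : ∫ v : ℝ, l^2 * v^6 * Real.exp (-l * v^2) = C6 / (l * √l) := by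
  have hs : √l ^ 2 = l := Real.sq_sqrt hl.le
  have hsp : 0 < √l := Real.sqrt_pos.2 hl
  have := Measure.integral_comp_mul_left (fun v : ℝ => v^6 * Real.exp (-1 * v^2)) (√l)
  have h2 : (fun v : ℝ => l^2 * v^6 * Real.exp (-l * v^2)) = fun v : ℝ => l⁻¹ * ((√l * v)^6 * Real.exp (-1 * (√l * v)^2)) := by
    ext v
    rw [mul_pow, mul_pow, show √l ^ 6 = (√l^2)^3 by ring, hs]
    field_simp
  rw [h2, integral_const_mul, this, C6, abs_of_pos (by positivity), smul_eq_mul]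
  field_simp

lemma gauss_part (l : ℝ) (hl : 0 < l) :
    Integrable (fun v : ℝ => ((Real.exp (-(2 * l) * v^2) : ℝ) : ℂ) * (1 + ww l v)) ∧
    ∫ v : ℝ, ((Real.exp (-(2 * l) * v^2) : ℝ) : ℂ) * (1 + ww l v) = ((√(π / (2 * l)) : ℝ) : ℂ) := by
  have h0 : Integrable (fun v : ℝ => ((Real.exp (-(2 * l) * v^2) : ℝ) : ℂ)) :=
    (integrable_exp_neg_mul_sq (by positivity : 0 < 2 * l)).ofReal
  have h3 : Integrable (fun v : ℝ => -(2/3 * l * (1 + Complex.I)) * ((v^3 * Real.exp (-(2 * l) * v^2) : ℝ) : ℂ)) :=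
    ((integrable_pow_gauss (2 * l) (by positivity) 3).ofReal (𝕜 := ℂ)).const_mul _
  have he : (fun v : ℝ => ((Real.exp (-(2 * l) * v^2) : ℝ) : ℂ) * (1 + ww l v)) =
      fun v : ℝ => ((Real.exp (-(2 * l) * v^2) : ℝ) : ℂ) + -(2/3 * l * (1 + Complex.I)) * ((v^3 * Real.exp (-(2 * l) * v^2) : ℝ) : ℂ) := by
    ext v; unfold ww; push_cast; ring
  rw [he]
  refine ⟨h0.add h3, ?_⟩
  rw [integral_add h0 h3, integral_const_mul, integral_complex_ofReal, integral_complex_ofReal, integral_cube, integral_gaussian]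
  simp

lemma phi_cont (l : ℝ) : Continuous (phi l) := by
  unfold phi ww; fun_prop

lemma phi_integral (l : ℝ) (hl : 1 ≤ l) : IntegrableOn (phi l) (Set.Ioi (-1)) ∧
    ‖(∫ v in Set.Ioi (-1:ℝ), phi l v) - ((√(π / (2 * l)) : ℝ) : ℂ)‖ ≤ 3 * C6 / (l * √l) := by
  have hl0 : 0 < l := by linarith
  obtain ⟨hi, hgauss⟩ := gauss_part l hl0
  have hdom : Integrable (fun v : ℝ => 3 * (l^2 * v^6 * Real.exp (-l * v^2))) := by
    have := ((integrable_pow_gauss l hl0 6).const_mul (l^2)).const_mul 3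
    simpa [mul_assoc] using this
  have hmeas : AEStronglyMeasurable ((Set.Ioi (-1:ℝ)).indicator (phi l)) :=
    (phi_cont l).aestronglyMeasurable.indicator measurableSet_Ioi
  have hg : Integrable (fun v => (Set.Ioi (-1:ℝ)).indicator (phi l) v - ((Real.exp (-(2 * l) * v^2) : ℝ) : ℂ) * (1 + ww l v)) :=
    hdom.mono' (hmeas.sub hi.aestronglyMeasurable) (Eventually.of_forall fun v => g_bound l v hl)
  have hind : Integrable ((Set.Ioi (-1:ℝ)).indicator (phi l)) := by
    have := hg.add hi
    refine this.congr (Eventually.of_forall fun v => ?_)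
    simp
  refine ⟨(integrable_indicator_iff measurableSet_Ioi).1 hind, ?_⟩
  rw [← integral_indicator measurableSet_Ioi, ← hgauss, ← integral_sub hind hi]
  refine (norm_integral_le_of_norm_le hdom (Eventually.of_forall fun v => g_bound l v hl)).trans ?_
  rw [integral_const_mul, integral_six l hl0, mul_div_assoc]

noncomputable def KK (l : ℝ) : ℂ := (1 + Complex.I) * Complex.exp (-(2 * Complex.I * l / 3)) * ∫ v in Set.Ioi (-1:ℝ), phi l v

lemma hh_tendsto (l : ℝ) (hl : 1 ≤ l) :
    Tendsto (fun R : ℝ => ∫ t in (-R)..R, hh l t) atTop (nhds (KK l + (starRingEnd ℂ) (KK l))) := by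
  have hP : Tendsto (fun R : ℝ => seg (hh l) (-Complex.I) R) atTop (nhds (KK l)) := by
    have h1 : Tendsto (fun R : ℝ => (1 + Complex.I) * Complex.exp (-(2 * Complex.I * l / 3)) * ∫ v in (-1:ℝ)..(R-1), phi l v) atTop (nhds (KK l)) := by
      apply Tendsto.const_mul
      exact intervalIntegral_tendsto_integral_Ioi _ (phi_integral l hl).1 (tendsto_atTop_add_const_right _ (-1) tendsto_id)
    have := h1.add (vert_tendsto l (by linarith))
    rw [add_zero] at this
    refine this.congr' ?_
    filter_upwards [eventually_gt_atTop 0] with R hR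
    rw [← seg_diag l R hR, seg_add (hh_diff l)]
  have hc : Tendsto (fun R : ℝ => (starRingEnd ℂ) (seg (hh l) (-Complex.I) R)) atTop (nhds ((starRingEnd ℂ) (KK l))) :=
    (Complex.continuous_conj.tendsto _).comp hP
  refine (hP.add hc).congr fun R => ?_
  rw [seg_conj, add_comm]
  simp only [map_neg, Complex.conj_I, neg_neg, Complex.conj_ofReal]
  rw [seg_add (hh_diff l), ← seg_real]
  push_cast; rfl

lemma Ai_eq (r : ℝ) (hr : 1 ≤ r) :
    Ai (-r^2) = ((2 * Real.pi : ℝ)⁻¹ : ℂ) * (r * (KK (r^3) + (starRingEnd ℂ) (KK (r^3)))) := by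
  have hr0 : 0 < r := by linarith
  unfold Ai
  congr 1
  apply Tendsto.limUnder_eq
  have h1 := (hh_tendsto (r^3) (one_le_pow₀ hr)).comp (tendsto_id.atTop_div_const hr0)
  refine (h1.const_mul (r:ℂ)).congr fun R => ?_
  have := intervalIntegral.integral_comp_div (fun t : ℝ => hh (r^3) t) hr0.ne' (a := -R) (b := R)
  simp only [Function.comp, id]
  rw [neg_div, Complex.real_smul] at this
  rw [← this]
  congr 1; ext t
  unfold hh
  congr 1
  have : (r:ℂ) ≠ 0 := by exact_mod_cast hr0.ne'
  push_cast
  field_simp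
  ring

lemma exp_quarter : Complex.exp (-(Real.pi / 4 : ℝ) * Complex.I) = ((√2 / 2 : ℝ) : ℂ) * (1 - Complex.I) := by
  rw [← Complex.ofReal_neg, Complex.exp_mul_I, ← Complex.ofReal_cos, ← Complex.ofReal_sin, Real.cos_neg, Real.sin_neg,
    Real.cos_pi_div_four, Real.sin_pi_div_four]
  push_cast; ring

noncomputable def mainT (r : ℝ) : ℂ := ((1 / (2 * √π * √r) : ℝ) : ℂ) * Complex.exp (-(Real.pi / 4 : ℝ) * Complex.I) *
  (Complex.exp (2 * Complex.I * (r^3 : ℝ) / 3) + Complex.I * Complex.exp (-(2 * Complex.I * (r^3 : ℝ) / 3)))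

lemma airy_main (r : ℝ) (hr : 1 ≤ r) : ‖Ai (-r^2) - mainT r‖ ≤ 6 * C6 / π / (√r * r^3) := by
  have hr0 : 0 < r := by linarith
  set l := r^3 with hl
  have hl1 : 1 ≤ l := one_le_pow₀ hr
  have hE := (phi_integral l hl1).2
  set J := ∫ v in Set.Ioi (-1:ℝ), phi l v with hJ
  set E := J - ((√(π / (2 * l)) : ℝ) : ℂ) with hEd
  set M : ℂ := (1 + Complex.I) * Complex.exp (-(2 * Complex.I * l / 3)) with hM
  have hsr : 0 < √r := Real.sqrt_pos.2 hr0
  have hsl : √l = r * √r := by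
    rw [hl, show r^3 = r^2 * r by ring, Real.sqrt_mul (by positivity), Real.sqrt_sq hr0.le]
  have hMc : (starRingEnd ℂ) M = (1 - Complex.I) * Complex.exp (2 * Complex.I * l / 3) := by
    rw [hM, map_mul, ← Complex.exp_conj]
    have h3 : (starRingEnd ℂ) 3 = 3 := Complex.conj_ofNat 3
    have h2 : (starRingEnd ℂ) 2 = 2 := Complex.conj_ofNat 2
    simp [h3, h2]
    ring
  have hMn : ‖M‖ ≤ 2 := by
    rw [hM, norm_mul, show -(2 * Complex.I * (l:ℂ) / 3) = ((-(2 * l / 3) : ℝ) : ℂ) * Complex.I by push_cast; ring,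
      Complex.norm_exp_ofReal_mul_I, mul_one]
    refine (norm_add_le _ _).trans ?_
    simp; norm_num
  have hmain : mainT r = ((2 * Real.pi : ℝ)⁻¹ : ℂ) * (r * (((√(π / (2 * l)) : ℝ) : ℂ) * (M + (starRingEnd ℂ) M))) := by
    rw [hMc, hM, mainT, exp_quarter, ← hl, Real.sqrt_div Real.pi_pos.le, Real.sqrt_mul (by norm_num), hsl]
    have hp : (√π : ℂ)^2 = π := by exact_mod_cast Real.sq_sqrt Real.pi_pos.le
    have h2 : (√2 : ℂ)^2 = 2 := by exact_mod_cast Real.sq_sqrt (by norm_num : (0:ℝ) ≤ 2)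
    have hp0 : (√π : ℂ) ≠ 0 := by exact_mod_cast (Real.sqrt_pos.2 Real.pi_pos).ne'
    have h20 : (√2 : ℂ) ≠ 0 := by exact_mod_cast (Real.sqrt_pos.2 (by norm_num : (0:ℝ) < 2)).ne'
    have hr00 : (r : ℂ) ≠ 0 := by exact_mod_cast hr0.ne'
    have hsr0 : (√r : ℂ) ≠ 0 := by exact_mod_cast hsr.ne'
    generalize Complex.exp (-(2 * Complex.I * (l:ℂ) / 3)) = Y
    generalize Complex.exp (2 * Complex.I * (l:ℂ) / 3) = X
    push_cast
    rw [← hp]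
    field_simp
    rw [h2]
    linear_combination (2 * Y) * (-Complex.I_sq)
  have hdiff : Ai (-r^2) - mainT r = ((2 * Real.pi : ℝ)⁻¹ : ℂ) * (r * (M * E + (starRingEnd ℂ) (M * E))) := by
    rw [Ai_eq r hr, hmain, KK, ← hl, ← hJ, ← hM]
    have : J = ((√(π / (2 * l)) : ℝ) : ℂ) + E := by rw [hEd]; ring
    rw [this]
    simp only [map_mul, map_add, Complex.conj_ofReal]
    ring
  rw [hdiff, ← Complex.ofReal_inv, norm_mul, norm_mul, Complex.norm_real, Complex.norm_real, Real.norm_of_nonneg (by positivity),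
    Real.norm_of_nonneg hr0.le]
  have hME : ‖M * E + (starRingEnd ℂ) (M * E)‖ ≤ 4 * (3 * C6 / (l * √l)) := by
    refine (norm_add_le _ _).trans ?_
    rw [RCLike.norm_conj, norm_mul]
    nlinarith [norm_nonneg E, norm_nonneg M]
  calc _ ≤ (2 * π)⁻¹ * (r * (4 * (3 * C6 / (l * √l)))) := by gcongr
    _ = _ := by
      rw [hsl]
      have := Real.pi_pos
      field_simp
      ring

theorem airy_uniform_asymptotics (k₀ L : ℝ) (hk₀ : 0 < k₀) :
    ∃ f₀ > (0 : ℝ), ∃ ε > (0 : ℝ), ∃ C > (0 : ℝ), ∃ a₁ a₂ : ℝ → ℝ → ℂ,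
      (∀ k ∈ Set.Ioo (k₀ - ε) (k₀ + ε), ∀ f ∈ Set.Ioo (0 : ℝ) f₀,
        ‖a₁ k f - 1‖ ≤ C * f ∧ ‖a₂ k f - 1‖ ≤ C * f) ∧
      (∀ k ∈ Set.Ioo (k₀ - ε) (k₀ + ε), ∀ f ∈ Set.Ioo (0 : ℝ) f₀,
        0 < k ^ 2 - f * L ∧
        Ai (f ^ ((1:ℝ)/3) * (L - k ^ 2 / f)) =
          ((f ^ ((1:ℝ)/6) : ℝ) : ℂ) * Complex.exp (-(Real.pi / 4 : ℝ) * Complex.I) *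
            (1 / (2 * Real.sqrt Real.pi * (((k ^ 2 - f * L) ^ ((1:ℝ)/4) : ℝ) : ℂ))) *
            (Complex.exp (2 * Complex.I * (((k ^ 2 - f * L) ^ ((3:ℝ)/2) : ℝ) : ℂ) / (3 * f))
                * a₁ k f +
              Complex.I *
                Complex.exp (-(2 * Complex.I * (((k ^ 2 - f * L) ^ ((3:ℝ)/2) : ℝ) : ℂ)) / (3 * f))
                * a₂ k f)) := by
  set m := k₀^2 / 8 with hm
  have hm0 : 0 < m := by positivity
  have hsm : 0 < √m := Real.sqrt_pos.2 hm0
  have hC6 : 0 ≤ C6 := integral_nonneg fun v => by positivity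
  have hpi := Real.pi_pos
  have hspi : 0 < √π := Real.sqrt_pos.2 hpi
  -- the pieces
  let P : ℝ → ℝ → ℂ := fun k f =>
    ((f ^ ((1:ℝ)/6) : ℝ) : ℂ) * Complex.exp (-(Real.pi / 4 : ℝ) * Complex.I) *
            (1 / (2 * Real.sqrt Real.pi * (((k ^ 2 - f * L) ^ ((1:ℝ)/4) : ℝ) : ℂ)))
  let X : ℝ → ℝ → ℂ := fun k f =>
    Complex.exp (2 * Complex.I * (((k ^ 2 - f * L) ^ ((3:ℝ)/2) : ℝ) : ℂ) / (3 * f))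
  let Y : ℝ → ℝ → ℂ := fun k f =>
    Complex.exp (-(2 * Complex.I * (((k ^ 2 - f * L) ^ ((3:ℝ)/2) : ℝ) : ℂ)) / (3 * f))
  let Err : ℝ → ℝ → ℂ := fun k f =>
    Ai (f ^ ((1:ℝ)/3) * (L - k ^ 2 / f)) - P k f * (X k f + Complex.I * Y k f)
  set D := 2 * √π * (6 * C6 / π) with hD
  have hD0 : 0 ≤ D := by positivity
  have key : ∀ k ∈ Set.Ioo (k₀ - k₀/2) (k₀ + k₀/2), ∀ f ∈ Set.Ioo (0 : ℝ) (min (m / (|L| + 1)) (√m^3)),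
      0 < k ^ 2 - f * L ∧ P k f ≠ 0 ∧ ‖X k f‖ = 1 ∧ ‖Err k f‖ ≤ ‖P k f‖ * (D / √m^3 * f) := by
    intro k hk f hf
    have hf0 : 0 < f := hf.1
    have hf1 : f < m / (|L| + 1) := hf.2.trans_le (min_le_left _ _)
    have hf2 : f < √m^3 := hf.2.trans_le (min_le_right _ _)
    have hη : m ≤ k^2 - f * L := by
      have h1 : f * (|L| + 1) < m := (lt_div_iff₀ (by positivity)).1 hf1
      have h2 : f * L ≤ f * |L| := mul_le_mul_of_nonneg_left (le_abs_self L) hf0.le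
      have h3 : k₀^2/4 < k^2 := by nlinarith [hk.1]
      nlinarith
    have hη0 : 0 < k^2 - f * L := by linarith
    refine ⟨hη0, ?_⟩
    set η := k^2 - f * L with hηd
    set p := f ^ ((1:ℝ)/6) with hp
    set q := η ^ ((1:ℝ)/4) with hq
    have hp0 : 0 < p := Real.rpow_pos_of_pos hf0 _
    have hq0 : 0 < q := Real.rpow_pos_of_pos hη0 _
    have hfp : f = p^6 := by
      rw [hp, ← Real.rpow_natCast, ← Real.rpow_mul hf0.le]; norm_num
    have hηq : η = q^4 := by
      rw [hq, ← Real.rpow_natCast, ← Real.rpow_mul hη0.le]; norm_num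
    have hf3 : f ^ ((1:ℝ)/3) = p^2 := by
      rw [hp, ← Real.rpow_natCast, ← Real.rpow_mul hf0.le]; norm_num
    have hη3 : η ^ ((3:ℝ)/2) = q^6 := by
      rw [hq, ← Real.rpow_natCast, ← Real.rpow_mul hη0.le]; norm_num
    have hqm : √m ≤ q^2 := by
      rw [Real.sqrt_le_left (by positivity)]
      calc m ≤ η := hη
        _ = _ := by rw [hηq]; ring
    have hpq : p^2 ≤ q^2 := by
      refine le_trans ?_ hqm
      refine (pow_le_pow_iff_left₀ (by positivity) hsm.le (n := 3) (by norm_num)).1 ?_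
      calc (p^2)^3 = f := by rw [hfp]; ring
        _ ≤ _ := hf2.le
    set r := q^2/p^2 with hr
    have hr1 : 1 ≤ r := (one_le_div (by positivity)).2 hpq
    have hsr : √r = q/p := by
      rw [hr, ← div_pow, Real.sqrt_sq (by positivity)]
    have hr3 : r^3 = q^6/f := by rw [hr, hfp, div_pow]; ring
    have hx : f ^ ((1:ℝ)/3) * (L - k ^ 2 / f) = -r^2 := by
      have : L - k^2/f = -η/f := by rw [hηd]; field_simp; ring
      rw [this, hf3, hr, hηq, hfp]
      field_simp
    have hPeq : P k f = ((1 / (2 * √π * √r) : ℝ) : ℂ) * Complex.exp (-(Real.pi / 4 : ℝ) * Complex.I) := by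
      simp only [P]
      rw [← hηd, ← hp, ← hq, hsr]
      have h1 : (p:ℂ) ≠ 0 := by exact_mod_cast hp0.ne'
      have h2 : (q:ℂ) ≠ 0 := by exact_mod_cast hq0.ne'
      have h3 : (√π:ℂ) ≠ 0 := by exact_mod_cast hspi.ne'
      push_cast
      field_simp
    have hXeq : X k f = Complex.exp (2 * Complex.I * (r^3 : ℝ) / 3) := by
      simp only [X]
      rw [← hηd, hη3, hr3]
      congr 1
      push_cast
      field_simp
    have hYeq : Y k f = Complex.exp (-(2 * Complex.I * (r^3 : ℝ) / 3)) := by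
      simp only [Y]
      rw [← hηd, hη3, hr3]
      congr 1
      push_cast
      field_simp
    have hr0 : 0 < r := by linarith
    have hsr0 : 0 < √r := Real.sqrt_pos.2 hr0
    have hPn : ‖P k f‖ = 1 / (2 * √π * √r) := by
      rw [hPeq, norm_mul, ← Complex.ofReal_neg, Complex.norm_exp_ofReal_mul_I, Complex.norm_real,
        Real.norm_of_nonneg (by positivity), mul_one]
    refine ⟨?_, ?_, ?_⟩
    · rw [← norm_pos_iff, hPn]; positivity
    · rw [hXeq, show 2 * Complex.I * ((r^3 : ℝ) : ℂ) / 3 = ((2 * r^3 / 3 : ℝ) : ℂ) * Complex.I by push_cast; ring,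
        Complex.norm_exp_ofReal_mul_I]
    · have hE : Err k f = Ai (-r^2) - mainT r := by
        simp only [Err]
        rw [hx, hPeq, hXeq, hYeq, mainT]
      rw [hE, hPn]
      refine (airy_main r hr1).trans ?_
      have h6 : √m^3 ≤ q^6 := by
        calc √m^3 ≤ (q^2)^3 := by gcongr
          _ = q^6 := by ring
      calc 6 * C6 / π / (√r * r^3) = 1 / (2 * √π * √r) * (D / q^6 * f) := by
            rw [hr3, hD]; field_simp
        _ ≤ _ := by gcongr
  refine ⟨min (m / (|L| + 1)) (√m^3), by positivity, k₀/2, by positivity, D / √m^3 + 1, by positivity,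
    fun k f => 1 + Err k f / (P k f * X k f), fun _ _ => 1, ?_, ?_⟩
  · intro k hk f hf
    obtain ⟨_, hP, hX, hE⟩ := key k hk f hf
    have hf0 : 0 < f := hf.1
    constructor
    · rw [add_sub_cancel_left, norm_div, norm_mul, hX, mul_one]
      rw [div_le_iff₀ (norm_pos_iff.2 hP)]
      refine hE.trans ?_
      rw [mul_comm]
      gcongr
      linarith
    · simp; positivity
  · intro k hk f hf
    obtain ⟨h0, hP, hX, hE⟩ := key k hk f hf
    refine ⟨h0, ?_⟩
    have hX0 : X k f ≠ 0 := by rw [← norm_pos_iff, hX]; norm_num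
    have : Ai (f ^ ((1:ℝ)/3) * (L - k ^ 2 / f)) = P k f * (X k f * (1 + Err k f / (P k f * X k f)) + Complex.I * Y k f * 1) := by
      field_simp
      simp only [Err]
      ring
    exact this
end

section
/- Let L > 0, let V : ℝ → ℝ be continuous with support contained in [-L, L], let λ ∈ ℝ, and let ψ : ℝ → ℂ be twice continuously differentiable, square integrable on ℝ, not identically zero, and satisfy -ψ''(x) + V(x)ψ(x) = λ ψ(x) for all x. Then λ < 0. -/
open MeasureTheory

lemma aux_mono {b : ℝ} {g g' : ℝ → ℝ} (h : ∀ x, b ≤ x → HasDerivAt g (g' x) x)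
    (h0 : ∀ x, b ≤ x → 0 ≤ g' x) : ∀ x, b ≤ x → g b ≤ g x := by
  have : MonotoneOn g (Set.Ici b) := by
    apply monotoneOn_of_deriv_nonneg (convex_Ici b)
    · intro x hx
      exact (h x hx).continuousAt.continuousWithinAt
    · intro x hx
      rw [interior_Ici] at hx
      exact (h x (le_of_lt hx)).differentiableAt.differentiableWithinAt
    · intro x hx
      rw [interior_Ici] at hx
      rw [(h x (le_of_lt hx)).deriv]
      exact h0 x (le_of_lt hx)
  intro x hx
  exact this (Set.mem_Ici.2 le_rfl) hx hx

lemma aux_const {b : ℝ} {g : ℝ → ℝ} (h : ∀ x, b ≤ x → HasDerivAt g 0 x) :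
    ∀ x, b ≤ x → g x = g b := by
  intro x hx
  apply le_antisymm
  · have := aux_mono (g := fun x => - g x) (g' := fun _ => -0) (fun y hy => (h y hy).neg)
      (fun _ _ => by simp) x hx
    linarith
  · exact aux_mono (g' := fun _ => 0) h (fun _ _ => le_rfl) x hx

lemma aux_nonint {u : ℝ → ℝ} (hu : Integrable u) {b c : ℝ} (hc : 0 < c)
    (h : ∀ x, b ≤ x → c ≤ u x) : False := by
  have h1 : IntegrableOn (fun _ : ℝ => c) (Set.Ici b) := by
    refine Integrable.mono' (hu.integrableOn (s := Set.Ici b)) (by fun_prop) ?_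
    filter_upwards [ae_restrict_mem measurableSet_Ici] with x hx
    rw [Real.norm_of_nonneg hc.le]
    exact h x hx
  rw [integrableOn_const_iff] at h1
  simp [hc.ne'] at h1

lemma aux_unique {W f f' : ℝ → ℝ} (hW : Continuous W) (hf : ∀ x, HasDerivAt f (f' x) x)
    (hf' : ∀ x, HasDerivAt f' (W x * f x) x) {a : ℝ} (h0 : f a = 0) (h1 : f' a = 0) :
    ∀ x, f x = 0 := by
  have hc : Continuous (fun x => 1 + |W x|) := by fun_prop
  set P : ℝ → ℝ := fun x => ∫ t in (0:ℝ)..x, (1 + |W t|) with hP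
  have hPd : ∀ x, HasDerivAt P (1 + |W x|) x := fun x =>
    intervalIntegral.integral_hasDerivAt_right (hc.intervalIntegrable _ _)
      (hc.stronglyMeasurableAtFilter _ _) hc.continuousAt
  have hGd : ∀ x, HasDerivAt (fun x => f x ^ 2 + f' x ^ 2)
      (2 * f x * f' x + 2 * f' x * (W x * f x)) x := by
    intro x
    refine HasDerivAt.congr_deriv (((hf x).pow 2).add ((hf' x).pow 2)) ?_
    simp
  have key : ∀ x, |2 * f x * f' x + 2 * f' x * (W x * f x)|
      ≤ (1 + |W x|) * (f x ^ 2 + f' x ^ 2) := by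
    intro x
    have e : 2 * f x * f' x + 2 * f' x * (W x * f x) = (1 + W x) * (2 * f x * f' x) := by ring
    rw [e, abs_mul]
    apply mul_le_mul _ _ (abs_nonneg _) (by positivity)
    · calc |1 + W x| ≤ |1| + |W x| := abs_add_le _ _
        _ = _ := by simp
    · rw [abs_le]
      constructor <;> nlinarith [sq_nonneg (f x + f' x), sq_nonneg (f x - f' x)]
  have hm : Monotone (fun x => (f x ^ 2 + f' x ^ 2) * Real.exp (P x)) := by
    have hd := fun x => (hGd x).mul (hPd x).exp
    apply monotone_of_deriv_nonneg (fun x => (hd x).differentiableAt)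
    intro x
    refine le_of_le_of_eq ?_ (hd x).deriv.symm
    have := (abs_le.1 (key x)).1
    nlinarith [Real.exp_pos (P x)]
  have ha : Antitone (fun x => (f x ^ 2 + f' x ^ 2) * Real.exp (-P x)) := by
    have hd := fun x => (hGd x).mul (hPd x).neg.exp
    apply antitone_of_deriv_nonpos (fun x => (hd x).differentiableAt)
    intro x
    refine le_of_eq_of_le (hd x).deriv ?_
    have := (abs_le.1 (key x)).2
    have h3 := Real.exp_pos (-P x)
    simp only [Pi.neg_apply]
    nlinarith
  intro x
  have hG : f x ^ 2 + f' x ^ 2 ≤ 0 := by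
    rcases le_total x a with h | h
    · have := hm h
      simp only [h0, h1] at this
      norm_num at this
      exact le_of_mul_le_mul_right (by simpa using this) (Real.exp_pos (P x))
    · have := ha h
      simp only [h0, h1] at this
      norm_num at this
      exact le_of_mul_le_mul_right (by simpa using this) (Real.exp_pos (-P x))
  have : f x ^ 2 = 0 := le_antisymm (by nlinarith [sq_nonneg (f' x)]) (sq_nonneg _)
  exact pow_eq_zero_iff (two_ne_zero) |>.1 this

lemma aux_real {L : ℝ} {V : ℝ → ℝ} (hV : Continuous V)
    (hsupp : Function.support V ⊆ Set.Icc (-L) L) {lam : ℝ} (hlam : 0 ≤ lam)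
    {f f' : ℝ → ℝ} (hf : ∀ x, HasDerivAt f (f' x) x)
    (hf' : ∀ x, HasDerivAt f' ((V x - lam) * f x) x)
    (hint : Integrable (fun x => f x ^ 2)) : ∀ x, f x = 0 := by
  obtain ⟨b, hb⟩ : ∃ b, b = L + 1 := ⟨_, rfl⟩
  have hV0 : ∀ x, b ≤ x → V x = 0 := by
    intro x hx
    by_contra h
    have := (hsupp h).2
    linarith
  have hfc : Continuous f := continuous_iff_continuousAt.2 fun x => (hf x).continuousAt
  obtain ⟨E, hE⟩ : ∃ E, E = f' b ^ 2 + lam * f b ^ 2 := ⟨_, rfl⟩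
  have hEc : ∀ x, b ≤ x → f' x ^ 2 + lam * f x ^ 2 = E := by
    intro x hx
    rw [hE]
    refine aux_const (g := fun x => f' x ^ 2 + lam * f x ^ 2) ?_ x hx
    intro y hy
    refine HasDerivAt.congr_deriv (((hf' y).pow 2).add (((hf y).pow 2).const_mul lam)) ?_
    rw [hV0 y hy]
    simp
    ring
  have hE0 : 0 ≤ E := by rw [hE]; positivity
  have hu : ∀ x, HasDerivAt (fun x => f x ^ 2) (2 * f x * f' x) x := by
    intro x
    refine HasDerivAt.congr_deriv ((hf x).pow 2) ?_
    simp
  have hEz : E = 0 := by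
    by_contra hne
    have hEp : 0 < E := lt_of_le_of_ne hE0 (Ne.symm hne)
    have hc : Continuous (fun x => f x ^ 2) := by fun_prop
    obtain ⟨M, hM⟩ : ∃ M, M = ∫ x, f x ^ 2 := ⟨_, rfl⟩
    set U : ℝ → ℝ := fun x => ∫ t in b..x, f t ^ 2 with hU
    have hUd : ∀ x, HasDerivAt U (f x ^ 2) x := fun x =>
      intervalIntegral.integral_hasDerivAt_right (hc.intervalIntegrable _ _)
        (hc.stronglyMeasurableAtFilter _ _) hc.continuousAt
    have hUM : ∀ x, b ≤ x → U x ≤ M := by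
      intro x hx
      rw [hM, hU]
      simp only
      rw [intervalIntegral.integral_of_le hx]
      exact setIntegral_le_integral hint (Filter.Eventually.of_forall fun x => sq_nonneg _)
    obtain ⟨C, hC⟩ : ∃ C, C = 2 * f b * f' b + 4 * lam * U b - 2 * E * b := ⟨_, rfl⟩
    have hw : ∀ x, b ≤ x → 2 * f x * f' x + 4 * lam * U x - 2 * E * x = C := by
      intro x hx
      rw [hC]
      refine aux_const (g := fun x => 2 * f x * f' x + 4 * lam * U x - 2 * E * x) ?_ x hx
      intro y hy
      refine HasDerivAt.congr_deriv (((((hf y).const_mul 2).mul (hf' y)).add ((hUd y).const_mul (4 * lam))).sub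
        ((hasDerivAt_id y).const_mul (2 * E))) ?_
      rw [hV0 y hy, ← hEc y hy]
      ring
    obtain ⟨d, hd⟩ : ∃ d, d = max b ((1 + 4 * lam * M - C) / (2 * E)) := ⟨_, rfl⟩
    have hbd : b ≤ d := hd ▸ le_max_left _ _
    have hge : ∀ x, d ≤ x → 1 ≤ 2 * f x * f' x := by
      intro x hx
      have h1 := hw x (hbd.trans hx)
      have h2 := mul_le_mul_of_nonneg_left (hUM x (hbd.trans hx)) hlam
      have h3 : (1 + 4 * lam * M - C) / (2 * E) ≤ x := (hd ▸ le_max_right _ _ : _ ≤ d).trans hx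
      rw [div_le_iff₀ (by positivity)] at h3
      nlinarith
    refine aux_nonint hint (b := d + 1) one_pos ?_
    intro x hx
    have := aux_mono (g := fun x => f x ^ 2 - x) (g' := fun x => 2 * f x * f' x - 1)
      (fun y _ => (hu y).sub (hasDerivAt_id y)) (b := d)
      (fun y hy => by have := hge y hy; linarith) x (by linarith)
    nlinarith [sq_nonneg (f d)]
  have hf'0 : ∀ x, b ≤ x → f' x = 0 := by
    intro x hx
    have h := hEc x hx
    have h2 : 0 ≤ lam * f x ^ 2 := by positivity
    exact pow_eq_zero_iff two_ne_zero |>.1 (le_antisymm (by linarith) (sq_nonneg (f' x)))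
  have hconst : ∀ x, b ≤ x → f x = f b :=
    aux_const fun y hy => by simpa [hf'0 y hy] using hf y
  have hfb : f b = 0 := by
    by_contra h
    exact aux_nonint hint (b := b) (c := f b ^ 2) (by positivity)
      fun x hx => by rw [hconst x hx]
  exact aux_unique (W := fun x => V x - lam) (by fun_prop) hf hf' hfb (hf'0 b le_rfl)



/-- Every `L²` eigenvalue of the one-dimensional Schrödinger operator `H = -d²/dx² + V`
with compactly supported continuous real potential `V` is strictly negative. -/
theorem eigenvalue_neg (L : ℝ) (hL : 0 < L)
    (V : ℝ → ℝ) (hV : Continuous V) (hsupp : Function.support V ⊆ Set.Icc (-L) L)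
    (lam : ℝ) (ψ : ℝ → ℂ) (hψ : ContDiff ℝ 2 ψ)
    (hψL2 : MemLp ψ 2 (volume : Measure ℝ))
    (hψne : ∃ x : ℝ, ψ x ≠ 0)
    (heq : ∀ x : ℝ, -(deriv (deriv ψ) x) + (V x : ℂ) * ψ x = (lam : ℂ) * ψ x) :
    lam < 0 := by
  by_contra hneg
  have hlam : 0 ≤ lam := not_lt.1 hneg
  have h1 : ∀ x, HasDerivAt ψ (deriv ψ x) x := fun x =>
    (hψ.differentiable (by norm_num) x).hasDerivAt
  have h2 : ∀ x, HasDerivAt (deriv ψ) (((V x - lam : ℝ) : ℂ) * ψ x) x := by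
    intro x
    have hd : ContDiff ℝ 1 (deriv ψ) := by
      have : ContDiff ℝ (1 + 1) ψ := by simpa [one_add_one_eq_two] using hψ
      exact (contDiff_succ_iff_deriv.1 this).2.2
    have := (hd.differentiable (by norm_num) x).hasDerivAt
    refine HasDerivAt.congr_deriv (this) ?_
    push_cast
    linear_combination -heq x
  have hi : Integrable (fun x => ‖ψ x‖ ^ 2) := by
    have := hψL2.integrable_norm_pow (by norm_num)
    simpa using this
  have hψc := hψ.continuous
  have hre : ∀ x, (ψ x).re = 0 := by
    refine aux_real hV hsupp hlam (f := fun x => (ψ x).re) (f' := fun x => (deriv ψ x).re)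
      (fun x => ?_) (fun x => ?_) ?_
    · exact (Complex.reCLM.hasFDerivAt.comp_hasDerivAt x (h1 x))
    · refine HasDerivAt.congr_deriv ((Complex.reCLM.hasFDerivAt.comp_hasDerivAt x (h2 x))) ?_
      rw [Complex.reCLM_apply, Complex.re_ofReal_mul]
    · refine hi.mono' (by fun_prop) (Filter.Eventually.of_forall fun x => ?_)
      rw [Real.norm_of_nonneg (sq_nonneg _), ← sq_abs]
      gcongr
      exact Complex.abs_re_le_norm _
  have him : ∀ x, (ψ x).im = 0 := by
    refine aux_real hV hsupp hlam (f := fun x => (ψ x).im) (f' := fun x => (deriv ψ x).im)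
      (fun x => ?_) (fun x => ?_) ?_
    · exact (Complex.imCLM.hasFDerivAt.comp_hasDerivAt x (h1 x))
    · refine HasDerivAt.congr_deriv ((Complex.imCLM.hasFDerivAt.comp_hasDerivAt x (h2 x))) ?_
      rw [Complex.imCLM_apply, Complex.im_ofReal_mul]
    · refine hi.mono' (by fun_prop) (Filter.Eventually.of_forall fun x => ?_)
      rw [Real.norm_of_nonneg (sq_nonneg _), ← sq_abs]
      gcongr
      exact Complex.abs_im_le_norm _
  obtain ⟨x, hx⟩ := hψne
  exact hx (Complex.ext (hre x) (him x))
end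

section
/- Let V : ℝ → ℝ be continuous with compact support, let f > 0 and E ∈ ℝ, and let ψ : ℝ → ℂ be twice continuously differentiable, square integrable on ℝ, and satisfy -ψ''(x) + (V(x) + f x) ψ(x) = E ψ(x) for all x. Then ψ is identically zero. -/
open MeasureTheory

lemma stark_real_vanish (f E A : ℝ) (hf : 0 < f) (u v : ℝ → ℝ)
    (hu : ∀ y, A ≤ y → HasDerivAt u (v y) y)
    (hv : ∀ y, A ≤ y → HasDerivAt v (-(f * y + E) * u y) y)
    (hint : Integrable (fun y => u y ^ 2)) (a : ℝ) (ha : A ≤ a)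
    (h1 : 1 ≤ f * a + E) (h2 : f ≤ f * a + E) : u a = 0 ∧ v a = 0 := by
  set F : ℝ → ℝ := fun y => v y ^ 2 + (f * y + E) * u y ^ 2 with hF
  have hq : ∀ y, HasDerivAt (fun y : ℝ => f * y + E) f y := fun y => by
    simpa using ((hasDerivAt_id y).const_mul f).add_const E
  have hqa : ∀ y, a ≤ y → f * a + E ≤ f * y + E := fun y hy => by nlinarith
  have hFd : ∀ y, a ≤ y → HasDerivAt F (f * u y ^ 2) y := fun y hy => by
    have := ((hv y (ha.trans hy)).pow 2).add ((hq y).mul ((hu y (ha.trans hy)).pow 2))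
    refine this.congr_deriv ?_
    simp
    ring
  have hFmono : ∀ y, a ≤ y → F a ≤ F y := fun y hy => by
    have : MonotoneOn F (Set.Ici a) := by
      refine monotoneOn_of_hasDerivWithinAt_nonneg (f' := fun y => f * u y ^ 2) (convex_Ici a)
        (fun y hy => (hFd y hy).continuousAt.continuousWithinAt) ?_ ?_
      · intro y hy
        rw [interior_Ici] at hy
        exact (hFd y (le_of_lt hy)).hasDerivWithinAt
      · intro y hy
        positivity
    exact this (Set.mem_Ici.2 le_rfl) (Set.mem_Ici.2 hy) hy
  have hFbd : ∀ y, a ≤ y → F y ≤ F a + f * ∫ t, u t ^ 2 := fun y hy => by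
    have h := intervalIntegral.integral_eq_sub_of_hasDerivAt (a := a) (b := y) (f := F)
      (f' := fun y => f * u y ^ 2)
      (fun t ht => hFd t (by rw [Set.uIcc_of_le hy] at ht; exact ht.1))
      ((hint.const_mul f).intervalIntegrable)
    rw [intervalIntegral.integral_of_le hy, integral_const_mul] at h
    have h3 : ∫ t in Set.Ioc a y, u t ^ 2 ≤ ∫ t, u t ^ 2 :=
      setIntegral_le_integral hint (Filter.Eventually.of_forall fun t => sq_nonneg _)
    have := mul_le_mul_of_nonneg_left h3 hf.le
    linarith
  by_cases hc : F a = 0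
  · simp only [hF] at hc
    have e1 : 0 ≤ v a ^ 2 := sq_nonneg _
    have e2 : 0 ≤ u a ^ 2 := sq_nonneg _
    have e3 : u a ^ 2 = 0 := by nlinarith
    have e4 : v a ^ 2 = 0 := by nlinarith
    exact ⟨by simpa using e3, by simpa using e4⟩
  exfalso
  have hcpos : 0 < F a := by
    refine lt_of_le_of_ne ?_ (Ne.symm hc)
    simp only [hF]
    have : 0 ≤ f * a + E := by linarith
    positivity
  set c := F a with hcdef
  have huv : ∀ y, a ≤ y → |u y * v y| ≤ F y / 2 := fun y hy => by
    have := hqa y hy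
    simp only [hF]
    rw [abs_le]
    constructor <;> nlinarith [sq_nonneg (u y + v y), sq_nonneg (u y - v y), sq_nonneg (u y)]
  set H : ℝ → ℝ := fun y => u y * v y / (f * y + E) + 2 / f * F y
    - c / (2 * f) * Real.log (f * y + E) with hH
  have hHd : ∀ y, a ≤ y → HasDerivAt H
      (F y / (f * y + E) - f * (u y * v y) / (f * y + E) ^ 2 - c / (2 * (f * y + E))) y := by
    intro y hy
    have hpos : f * y + E ≠ 0 := by have := hqa y hy; linarith
    have := (((((hu y (ha.trans hy)).mul (hv y (ha.trans hy))).div (hq y) hpos).add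
      ((hFd y hy).const_mul (2 / f))).sub (((hq y).log hpos).const_mul (c / (2 * f))))
    refine this.congr_deriv ?_
    simp only [hF, Pi.mul_apply]
    field_simp
    ring
  have hHmono : MonotoneOn H (Set.Ici a) := by
    refine monotoneOn_of_hasDerivWithinAt_nonneg (convex_Ici a)
      (fun y hy => (hHd y hy).continuousAt.continuousWithinAt) ?_ ?_
      (f' := fun y => F y / (f * y + E) - f * (u y * v y) / (f * y + E) ^ 2
        - c / (2 * (f * y + E)))
    · intro y hy
      rw [interior_Ici] at hy
      exact (hHd y (le_of_lt hy)).hasDerivWithinAt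
    · intro y hy
      rw [interior_Ici] at hy
      have hy : a ≤ y := le_of_lt hy
      have hqy := hqa y hy
      have hq0 : 0 < f * y + E := by linarith
      have hm := hFmono y hy
      have := (abs_le.1 (huv y hy)).2
      have e : F y / (f * y + E) - f * (u y * v y) / (f * y + E) ^ 2 - c / (2 * (f * y + E))
        = ((F y - c / 2) * (f * y + E) - f * (u y * v y)) / (f * y + E) ^ 2 := by
        field_simp
        ring
      rw [e]
      apply div_nonneg _ (sq_nonneg _)
      have k1 : f * (u y * v y) ≤ f * (F y / 2) := mul_le_mul_of_nonneg_left this hf.le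
      have k2 : f * (F y / 2) ≤ (f * y + E) * (F y / 2) :=
        mul_le_mul_of_nonneg_right (by linarith) (by linarith)
      have k3 : (f * y + E) * (F y / 2) ≤ (f * y + E) * (F y - c / 2) :=
        mul_le_mul_of_nonneg_left (by linarith) hq0.le
      linarith
  set M := c + f * ∫ t, u t ^ 2 with hM
  have key : ∀ y, a ≤ y → c / (2 * f) * Real.log (f * y + E) ≤ (M / 2 + 2 / f * M) - H a := by
    intro y hy
    have hh := hHmono (Set.mem_Ici.2 le_rfl) (Set.mem_Ici.2 hy) hy
    have hqy := hqa y hy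
    have hb := hFbd y hy
    have hm := hFmono y hy
    have := (abs_le.1 (huv y hy)).2
    have k1 : u y * v y / (f * y + E) ≤ M / 2 := by
      rw [div_le_iff₀ (by linarith)]
      nlinarith
    have k2 : 2 / f * F y ≤ 2 / f * M := mul_le_mul_of_nonneg_left hb (by positivity)
    have : H y = u y * v y / (f * y + E) + 2 / f * F y
      - c / (2 * f) * Real.log (f * y + E) := rfl
    linarith
  have ht : Filter.Tendsto (fun y : ℝ => c / (2 * f) * Real.log (f * y + E))
      Filter.atTop Filter.atTop := by
    apply Filter.Tendsto.const_mul_atTop (by positivity)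
    apply Real.tendsto_log_atTop.comp
    exact Filter.tendsto_atTop_add_const_right _ _ (Filter.tendsto_id.const_mul_atTop hf)
  obtain ⟨y, hy1, hy2⟩ := ((ht.eventually_gt_atTop ((M / 2 + 2 / f * M) - H a)).and
    (Filter.eventually_ge_atTop a)).exists
  exact absurd (key y hy2) (not_le.2 hy1)

lemma stark_ode_unique (p : ℝ → ℝ) (hp : Continuous p) (u v : ℝ → ℝ)
    (hu : ∀ y, HasDerivAt u (v y) y) (hv : ∀ y, HasDerivAt v (p y * u y) y) (a : ℝ)
    (ha : u a = 0) (ha' : v a = 0) (x : ℝ) : u x = 0 := by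
  set R := |a| + |x| + 1 with hR
  have haR : a ∈ Set.Ioo (-R) R := by
    rw [Set.mem_Ioo, ← abs_lt]; have := abs_nonneg x; linarith
  have hxR : x ∈ Set.Icc (-R) R := by
    rw [Set.mem_Icc, ← abs_le]; have := abs_nonneg a; linarith
  obtain ⟨C, hC⟩ := (isCompact_Icc (a := -R) (b := R)).exists_bound_of_continuousOn hp.continuousOn
  have hlip : ∀ t ∈ Set.Ioo (-R) R, LipschitzOnWith (Real.toNNReal (max 1 C))
      ((fun (t : ℝ) (z : ℝ × ℝ) => (z.2, p t * z.1)) t) Set.univ := by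
    intro t ht
    apply LipschitzOnWith.of_dist_le_mul
    intro z _ w _
    rw [Real.coe_toNNReal _ (by positivity)]
    have hCt := hC t ⟨ht.1.le, ht.2.le⟩
    simp only [Prod.dist_eq, Real.dist_eq, ← mul_sub, abs_mul]
    rw [Real.norm_eq_abs] at hCt
    apply max_le
    · calc |z.2 - w.2| = 1 * |z.2 - w.2| := by ring
        _ ≤ _ := mul_le_mul (le_max_left _ _) (le_max_right _ _) (abs_nonneg _) (by positivity)
    · exact mul_le_mul (hCt.trans (le_max_right _ _)) (le_max_left _ _) (abs_nonneg _)
        (by positivity)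
  have huc : Continuous u := continuous_iff_continuousAt.2 fun y => (hu y).continuousAt
  have hvc : Continuous v := continuous_iff_continuousAt.2 fun y => (hv y).continuousAt
  have := ODE_solution_unique_of_mem_Icc (s := fun _ => Set.univ) (f := fun t => (u t, v t))
    (g := fun _ => ((0 : ℝ), (0 : ℝ))) hlip haR (huc.prodMk hvc).continuousOn
    (fun t _ => (hu t).prodMk (hv t)) (fun _ _ => trivial) continuousOn_const
    (fun t _ => (hasDerivAt_const t ((0 : ℝ), (0 : ℝ))).congr_deriv (by ext <;> simp)) (fun _ _ => trivial)
    (by simp [ha, ha'])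
  exact congrArg Prod.fst (this hxR)

lemma stark_real (V : ℝ → ℝ) (hV : Continuous V) (hsupp : HasCompactSupport V)
    (f E : ℝ) (hf : 0 < f) (u v : ℝ → ℝ)
    (hu : ∀ y, HasDerivAt u (v y) y) (hv : ∀ y, HasDerivAt v ((V y + f * y - E) * u y) y)
    (hint : Integrable (fun y => u y ^ 2)) (x : ℝ) : u x = 0 := by
  obtain ⟨A, hA⟩ := hsupp.isCompact.isBounded.subset_closedBall 0
  have hV0 : ∀ y, A + 1 ≤ y → V (-y) = 0 := fun y hy => by
    by_contra h
    have := hA (subset_tsupport V h)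
    rw [Metric.mem_closedBall, dist_zero_right, norm_neg, Real.norm_eq_abs] at this
    linarith [le_abs_self y]
  set a := max (A + 1) ((1 + f - E) / f) with hadef
  have h1 : 1 + f ≤ f * a + E := by
    have : (1 + f - E) / f ≤ a := le_max_right _ _
    rw [div_le_iff₀ hf] at this
    linarith
  have hneg : ∀ y : ℝ, HasDerivAt (fun y : ℝ => -y) (-1) y := fun y => hasDerivAt_neg y
  have := stark_real_vanish f E (A + 1) hf (fun y => u (-y)) (fun y => -v (-y))
    (fun y _ => ((hu (-y)).comp y (hneg y)).congr_deriv (by ring))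
    (fun y hy => by
      refine (((hv (-y)).comp y (hneg y)).neg).congr_deriv ?_
      rw [hV0 y hy]; ring)
    (hint.comp_neg) a (le_max_left _ _) (by linarith) (by linarith)
  exact stark_ode_unique (fun y => V y + f * y - E) (by fun_prop) u v hu hv (-a) this.1
    (by simpa using this.2) x

/-- The one-dimensional Stark Hamiltonian `H_f = -d²/dx² + V(x) + f x` with constant
field `f > 0` and compactly supported continuous real potential `V` has no eigenvalues:
every square-integrable `C²` solution of the eigenvalue equation vanishes identically. -/
theorem stark_no_eigenvalues (V : ℝ → ℝ) (hV : Continuous V)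
    (hsupp : HasCompactSupport V)
    (f E : ℝ) (hf : 0 < f)
    (ψ : ℝ → ℂ) (hψ : ContDiff ℝ 2 ψ)
    (hψL2 : MemLp ψ 2 (volume : Measure ℝ))
    (heq : ∀ x : ℝ, -(deriv (deriv ψ) x) + ((V x : ℂ) + (f : ℂ) * x) * ψ x = (E : ℂ) * ψ x) :
    ∀ x : ℝ, ψ x = 0 := by
  have hd : ∀ y, HasDerivAt ψ (deriv ψ y) y := fun y =>
    (hψ.differentiable (by norm_num) y).hasDerivAt
  have hψ' : ContDiff ℝ 1 (deriv ψ) := by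
    have : ContDiff ℝ (1 + 1) ψ := by simpa [one_add_one_eq_two] using hψ
    exact (contDiff_succ_iff_deriv.1 this).2.2
  have hd2 : ∀ y, HasDerivAt (deriv ψ) (((V y + f * y - E : ℝ) : ℂ) * ψ y) y := fun y => by
    refine ((hψ'.differentiable (by norm_num) y).hasDerivAt).congr_deriv ?_
    have := heq y
    push_cast
    linear_combination -this
  intro x
  apply Complex.ext
  · refine stark_real V hV hsupp f E hf (fun y => (ψ y).re) (fun y => (deriv ψ y).re)
      (fun y => ?_) (fun y => ?_) ?_ x
    · exact Complex.reCLM.hasFDerivAt.comp_hasDerivAt y (hd y)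
    · refine (Complex.reCLM.hasFDerivAt.comp_hasDerivAt y (hd2 y)).congr_deriv ?_
      rw [Complex.reCLM_apply, Complex.re_ofReal_mul]
    · exact (hψL2.re).integrable_sq
  · refine stark_real V hV hsupp f E hf (fun y => (ψ y).im) (fun y => (deriv ψ y).im)
      (fun y => ?_) (fun y => ?_) ?_ x
    · exact Complex.imCLM.hasFDerivAt.comp_hasDerivAt y (hd y)
    · refine (Complex.imCLM.hasFDerivAt.comp_hasDerivAt y (hd2 y)).congr_deriv ?_
      rw [Complex.imCLM_apply, Complex.im_ofReal_mul]
    · exact (hψL2.im).integrable_sq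
end
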